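/- For ε ∈ [0,1] and density operators ρ_AB, σ_AB with (1/2)‖ρ_AB - σ_AB‖₁ ≤ ε, the conditional min-entropies satisfy |H_min(A|B)_σ - H_min(A|B)_ρ| ≤ log(1 + ε d_A²). -/

import Mathlib

open Matrix MeasureTheory
open scoped Kronecker ComplexOrder

noncomputable def mpow {n : Type*} [Fintype n] [DecidableEq n]
    (A : Matrix n n ℂ) (p : ℝ) : Matrix n n ℂ :=
  if hA : A.IsHermitian then
    (hA.eigenvectorUnitary : Matrix n n ℂ) *
      Matrix.diagonal (fun i => ((hA.eigenvalues i ^ p : ℝ) : ℂ)) *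
      (star (hA.eigenvectorUnitary : Matrix n n ℂ))
  else 0

noncomputable def traceNorm {n : Type*} [Fintype n] [DecidableEq n]
    (A : Matrix n n ℂ) : ℝ :=
  (mpow (Aᴴ * A) (1/2)).trace.re

def IsDensity {n : Type*} [Fintype n] [DecidableEq n] (ρ : Matrix n n ℂ) : Prop :=
  ρ.PosSemidef ∧ ρ.trace = 1

noncomputable def sandTr {a b : Type*} [Fintype a] [DecidableEq a] [Fintype b] [DecidableEq b]
    (α : ℝ) (ρ : Matrix (a × b) (a × b) ℂ) (η : Matrix b b ℂ) : ℝ :=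
  (mpow (((1 : Matrix a a ℂ) ⊗ₖ mpow η ((1 - α)/(2*α))) * ρ *
      ((1 : Matrix a a ℂ) ⊗ₖ mpow η ((1 - α)/(2*α)))) α).trace.re

noncomputable def Hcond {a b : Type*} [Fintype a] [DecidableEq a] [Fintype b] [DecidableEq b]
    (α : ℝ) (ρ : Matrix (a × b) (a × b) ℂ) : ℝ :=
  ⨆ η : {η : Matrix b b ℂ // IsDensity η}, (1/(1-α)) * Real.logb 2 (sandTr α ρ η)

/-- Conditional min-entropy:
`H_min(A|B)_ρ = sup {λ : ∃ density η_B, ρ_AB ≤ 2^{-λ} Id_A ⊗ η_B}`. -/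
noncomputable def Hmin {a b : Type*} [Fintype a] [DecidableEq a] [Fintype b] [DecidableEq b]
    (ρ : Matrix (a × b) (a × b) ℂ) : ℝ :=
  sSup {l : ℝ | ∃ η : Matrix b b ℂ, IsDensity η ∧
    (((2:ℝ) ^ (-l)) • ((1 : Matrix a a ℂ) ⊗ₖ η) - ρ).PosSemidef}

/-!
Writing `W = 2^{-λ} η_B`, the quantity `2^{-H_min(A|B)_ρ}` is the infimum of `tr W` over positive
semidefinite `W` on `B` with `ρ ≤ Id_A ⊗ W`. The positive part `Q` of `σ - ρ` satisfies `σ ≤ ρ + Q`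
and, as `σ - ρ` is traceless, `tr Q = ‖σ - ρ‖₁ / 2 ≤ ε`. Pinching to the diagonal blocks gives
`Q ≤ d_A Id_A ⊗ Tr_A Q`, so that if `W` dominates `ρ` then `W + d_A Tr_A Q` dominates `σ`. Taking
traces in `ρ ≤ Id_A ⊗ W` yields `1 ≤ d_A tr W`, which turns the additive error `d_A tr Q` into the
factor `1 + ε d_A²`.
-/

section PartialTrace

open scoped MatrixOrder

variable {𝕜 ι m n a b : Type*} [RCLike 𝕜]

theorem trace_le_trace_of_le [Fintype n] {A B : Matrix n n 𝕜} (h : A ≤ B) : A.trace ≤ B.trace :=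
  OrderHomClass.mono (tracePositiveLinearMap n 𝕜 𝕜) h

theorem kronecker_le_kronecker_of_posSemidef_right [Finite a] [Finite b]
    {X Y : Matrix a a 𝕜} {Z : Matrix b b 𝕜} (hXY : X ≤ Y) (hZ : Z.PosSemidef) :
    X ⊗ₖ Z ≤ Y ⊗ₖ Z := by
  have sub_kronecker : Y ⊗ₖ Z - X ⊗ₖ Z = (Y - X) ⊗ₖ Z := by
    rw [sub_eq_iff_eq_add, ← add_kronecker, sub_add_cancel]
  rw [Matrix.le_iff, sub_kronecker]
  exact (Matrix.le_iff.1 hXY).kronecker hZ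

/-- The operator form of `‖∑ i, vᵢ‖² ≤ |ι| ∑ i, ‖vᵢ‖²`. -/
theorem sum_mul_mul_conjTranspose_sum_le [Finite m] [Fintype n] [Fintype ι] (P : ι → Matrix m n 𝕜)
    {Q : Matrix n n 𝕜} (hQ : Q.PosSemidef) :
    (∑ i, P i) * Q * (∑ i, P i)ᴴ ≤ Fintype.card ι • ∑ i, P i * Q * (P i)ᴴ := by
  have cross : (∑ i, P i) * Q * (∑ i, P i)ᴴ = ∑ i, ∑ j, P j * Q * (P i)ᴴ := by
    simp only [conjTranspose_sum, Matrix.sum_mul, Matrix.mul_sum]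
  have polarization :
      Fintype.card ι • ∑ i, P i * Q * (P i)ᴴ - (∑ i, P i) * Q * (∑ i, P i)ᴴ =
        (2⁻¹ : ℝ) • ∑ i, ∑ j, (P i - P j) * Q * (P i - P j)ᴴ := by
    rw [eq_inv_smul_iff₀ two_ne_zero, two_smul]
    simp only [cross, conjTranspose_sub, Matrix.sub_mul, Matrix.mul_sub, Finset.sum_sub_distrib,
      Finset.sum_const, Finset.card_univ, ← Finset.smul_sum]
    rw [Finset.sum_comm (f := fun i j ↦ P i * Q * (P j)ᴴ)]
    abel
  rw [Matrix.le_iff, polarization]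
  exact (posSemidef_sum _ fun i _ ↦ posSemidef_sum _ fun j _ ↦
    hQ.mul_mul_conjTranspose_same (P i - P j)).smul (by positivity)

theorem single_le_one [DecidableEq a] (i : a) : Matrix.single i i (1 : 𝕜) ≤ 1 := by
  rw [Matrix.le_iff, ← diagonal_single, ← diagonal_one, diagonal_sub, posSemidef_diagonal_iff]
  intro j
  obtain rfl | hj := eq_or_ne j i <;> simp [*]

variable [Fintype a]

/-- The partial trace `Tr_A` of a matrix on the tensor product of the spaces indexed by `a` and
`b`, as the sum of its diagonal blocks. -/
def partialTrace (Q : Matrix (a × b) (a × b) 𝕜) : Matrix b b 𝕜 :=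
  ∑ i, Q.submatrix (Prod.mk i) (Prod.mk i)

theorem posSemidef_partialTrace {Q : Matrix (a × b) (a × b) 𝕜} (hQ : Q.PosSemidef) :
    (partialTrace Q).PosSemidef :=
  posSemidef_sum _ fun i _ ↦ hQ.submatrix (Prod.mk i)

theorem trace_partialTrace [Fintype b] (Q : Matrix (a × b) (a × b) 𝕜) :
    (partialTrace Q).trace = Q.trace := by
  simp only [partialTrace, trace, diag_apply, submatrix_apply, Matrix.sum_apply,
    Fintype.sum_prod_type_right]

variable [DecidableEq a]

theorem le_card_smul_sum_diagonal_blocks [Finite b] {Q : Matrix (a × b) (a × b) 𝕜}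
    (hQ : Q.PosSemidef) :
    Q ≤ Fintype.card a •
      ∑ i, Matrix.single i i (1 : 𝕜) ⊗ₖ Q.submatrix (Prod.mk i) (Prod.mk i) := by
  classical
  have := Fintype.ofFinite b
  let P (i : a) : Matrix (a × b) (a × b) 𝕜 := diagonal fun x ↦ if x.1 = i then 1 else 0
  have sum_P : ∑ i, P i = 1 := by
    ext x y
    simp [P, Matrix.sum_apply, diagonal_apply, one_apply]
  have compress (i : a) :
      P i * Q * (P i)ᴴ = Matrix.single i i 1 ⊗ₖ Q.submatrix (Prod.mk i) (Prod.mk i) := by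
    ext ⟨k, x⟩ ⟨l, y⟩
    by_cases hk : k = i <;> by_cases hl : l = i <;> simp_all [P, single_apply, eq_comm]
  simpa only [sum_P, compress, conjTranspose_one, one_mul, mul_one] using
    sum_mul_mul_conjTranspose_sum_le P hQ

theorem le_one_kronecker_card_smul_partialTrace [Finite b] {Q : Matrix (a × b) (a × b) 𝕜}
    (hQ : Q.PosSemidef) : Q ≤ 1 ⊗ₖ (Fintype.card a • partialTrace Q) :=
  calc
    Q ≤ Fintype.card a • ∑ i, Matrix.single i i (1 : 𝕜) ⊗ₖ Q.submatrix (Prod.mk i) (Prod.mk i) :=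
      le_card_smul_sum_diagonal_blocks hQ
    _ ≤ Fintype.card a • ∑ i, (1 : Matrix a a 𝕜) ⊗ₖ Q.submatrix (Prod.mk i) (Prod.mk i) := by
      gcongr with i
      exact kronecker_le_kronecker_of_posSemidef_right (single_le_one i) (hQ.submatrix (Prod.mk i))
    _ = 1 ⊗ₖ (Fintype.card a • partialTrace Q) := by
      rw [kronecker_smul, partialTrace]
      congr 1
      exact (map_sum (kroneckerBilinear (R := 𝕜) (1 : Matrix a a 𝕜)) _ _).symm

theorem trace_le_card_mul_trace_of_le_one_kronecker [Fintype b] {ρ : Matrix (a × b) (a × b) 𝕜}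
    {W : Matrix b b 𝕜} (h : ρ ≤ 1 ⊗ₖ W) : ρ.trace ≤ Fintype.card a * W.trace := by
  simpa only [trace_kronecker, trace_one] using trace_le_trace_of_le h

end PartialTrace

section TraceNorm

open scoped MatrixOrder

variable {n : Type*} [Fintype n] [DecidableEq n] {A : Matrix n n ℂ}

theorem mpow_eq_cfc (hA : A.IsHermitian) (p : ℝ) : mpow A p = cfc (fun x : ℝ ↦ x ^ p) A := by
  rw [mpow, dif_pos hA, hA.cfc_eq]
  rfl

theorem traceNorm_eq_re_trace_abs (A : Matrix n n ℂ) : traceNorm A = (CFC.abs A).trace.re := by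
  have hA : (Aᴴ * A).PosSemidef := posSemidef_conjTranspose_mul_self A
  rw [traceNorm, mpow_eq_cfc hA.1, CFC.abs, star_eq_conjTranspose,
    CFC.sqrt_eq_real_sqrt _ hA.nonneg]
  have sqrt_eq_rpow : Real.sqrt = fun x ↦ x ^ (1 / 2 : ℝ) := funext Real.sqrt_eq_rpow
  rw [cfcₙ_eq_cfc, sqrt_eq_rpow]

theorem re_trace_posPart (hA : A.IsHermitian) :
    (A⁺).trace.re = 1 / 2 * (traceNorm A + A.trace.re) := by
  have h : (CFC.abs A).trace + A.trace = A⁺.trace + A⁺.trace := by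
    rw [← trace_add, ← trace_add, ← two_nsmul, CFC.abs_add_self A hA]
  have h_re := congrArg Complex.re h
  simp only [Complex.add_re] at h_re
  rw [traceNorm_eq_re_trace_abs]
  linarith

theorem traceNorm_sub_comm (A B : Matrix n n ℂ) : traceNorm (A - B) = traceNorm (B - A) := by
  rw [traceNorm_eq_re_trace_abs, traceNorm_eq_re_trace_abs, ← neg_sub, CFC.abs_neg]

end TraceNorm

section MinEntropy

open scoped MatrixOrder

variable {a b : Type*} [Fintype a] [DecidableEq a] [Fintype b] {ρ σ Q : Matrix (a × b) (a × b) ℂ}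
  {W : Matrix b b ℂ}

/-- The exponents `λ` over which the supremum `H_min(A|B)_ρ` is taken. The density operator `η_B`
is absorbed into the unnormalized operator `W = 2^{-λ} η_B`. -/
def minEntropyExponents (ρ : Matrix (a × b) (a × b) ℂ) : Set ℝ :=
  {l | ∃ W : Matrix b b ℂ, W.PosSemidef ∧ W.trace = ((2 ^ (-l) : ℝ) : ℂ) ∧ ρ ≤ 1 ⊗ₖ W}

theorem re_trace_le_card_mul_re_trace (h : ρ ≤ 1 ⊗ₖ W) :
    ρ.trace.re ≤ Fintype.card a * W.trace.re := by
  simpa using (Complex.le_def.1 (trace_le_card_mul_trace_of_le_one_kronecker h)).1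

theorem re_trace_pos_of_le_one_kronecker (hρ : 0 < ρ.trace.re) (h : ρ ≤ 1 ⊗ₖ W) :
    0 < W.trace.re :=
  pos_of_mul_pos_right (hρ.trans_le (re_trace_le_card_mul_re_trace h)) (Nat.cast_nonneg _)

theorem neg_logb_re_trace_mem_minEntropyExponents (hρ : 0 < ρ.trace.re) (hW : W.PosSemidef)
    (h : ρ ≤ 1 ⊗ₖ W) : -Real.logb 2 W.trace.re ∈ minEntropyExponents ρ := by
  refine ⟨W, hW, ?_, h⟩
  rw [neg_neg, Real.rpow_logb two_pos (by norm_num) (re_trace_pos_of_le_one_kronecker hρ h)]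
  exact Complex.eq_re_of_ofReal_le hW.trace_nonneg

theorem bddAbove_minEntropyExponents (hρ : 0 < ρ.trace.re) :
    BddAbove (minEntropyExponents ρ) := by
  refine ⟨Real.logb 2 (Fintype.card a / ρ.trace.re), ?_⟩
  rintro l ⟨W, -, hW_trace, h⟩
  have hl := re_trace_le_card_mul_re_trace h
  rw [hW_trace, Complex.ofReal_re, Real.rpow_neg zero_le_two, ← div_eq_mul_inv,
    le_div_comm₀ hρ (by positivity)] at hl
  rwa [Real.le_logb_iff_rpow_le one_lt_two (hl.trans_lt' (by positivity))]

theorem nonempty_minEntropyExponents (hρ : ρ.PosSemidef) (hρ_pos : 0 < ρ.trace.re) :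
    (minEntropyExponents ρ).Nonempty :=
  ⟨_, neg_logb_re_trace_mem_minEntropyExponents hρ_pos
    (nsmul_nonneg (posSemidef_partialTrace hρ).nonneg _).posSemidef
    (le_one_kronecker_card_smul_partialTrace hρ)⟩

theorem re_trace_add_card_smul_partialTrace_le (hρ : 0 < ρ.trace.re) (hQ : 0 ≤ Q.trace.re)
    (h : ρ ≤ 1 ⊗ₖ W) :
    (W + Fintype.card a • partialTrace Q).trace.re ≤
      W.trace.re * (1 + Q.trace.re / ρ.trace.re * Fintype.card a ^ 2) :=
  calc
    (W + Fintype.card a • partialTrace Q).trace.re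
      = W.trace.re + Fintype.card a * (Q.trace.re / ρ.trace.re * ρ.trace.re) := by
        rw [trace_add, trace_smul, trace_partialTrace, div_mul_cancel₀ _ hρ.ne', Complex.add_re,
          Complex.re_nsmul, nsmul_eq_mul]
    _ ≤ W.trace.re +
          Fintype.card a * (Q.trace.re / ρ.trace.re * (Fintype.card a * W.trace.re)) := by
        gcongr
        exact re_trace_le_card_mul_re_trace h
    _ = W.trace.re * (1 + Q.trace.re / ρ.trace.re * Fintype.card a ^ 2) := by ring

variable [DecidableEq b]

theorem Hmin_eq_sSup_minEntropyExponents (ρ : Matrix (a × b) (a × b) ℂ) :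
    Hmin ρ = sSup (minEntropyExponents ρ) := by
  rw [Hmin]
  congr 1
  ext l
  have hl : (0 : ℝ) < 2 ^ (-l) := by positivity
  constructor
  · rintro ⟨η, ⟨hη, hη_trace⟩, h⟩
    refine ⟨(2 ^ (-l) : ℝ) • η, hη.smul hl.le, ?_, ?_⟩
    · rw [trace_smul, hη_trace, Complex.real_smul, mul_one]
    · rwa [kronecker_smul, Matrix.le_iff]
  · rintro ⟨W, hW, hW_trace, h⟩
    refine ⟨(2 ^ (-l) : ℝ)⁻¹ • W, ⟨hW.smul (inv_nonneg.2 hl.le), ?_⟩, ?_⟩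
    · rw [trace_smul, hW_trace, Complex.real_smul, ← Complex.ofReal_mul, inv_mul_cancel₀ hl.ne',
        Complex.ofReal_one]
    · rwa [kronecker_smul, smul_inv_smul₀ hl.ne', ← Matrix.le_iff]

theorem neg_logb_re_trace_le_Hmin (hρ : 0 < ρ.trace.re) (hW : W.PosSemidef) (h : ρ ≤ 1 ⊗ₖ W) :
    -Real.logb 2 W.trace.re ≤ Hmin ρ := by
  rw [Hmin_eq_sSup_minEntropyExponents]
  exact le_csSup (bddAbove_minEntropyExponents hρ)
    (neg_logb_re_trace_mem_minEntropyExponents hρ hW h)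

theorem Hmin_sub_Hmin_le_of_le_add (hρ : ρ.PosSemidef) (hρ_pos : 0 < ρ.trace.re)
    (hσ_pos : 0 < σ.trace.re) (hQ : Q.PosSemidef) (h : σ ≤ ρ + Q) :
    Hmin ρ - Hmin σ ≤ Real.logb 2 (1 + Q.trace.re / ρ.trace.re * Fintype.card a ^ 2) := by
  rw [sub_le_iff_le_add, Hmin_eq_sSup_minEntropyExponents ρ]
  refine csSup_le (nonempty_minEntropyExponents hρ hρ_pos) ?_
  rintro l ⟨W, hW, hW_trace, hρW⟩
  have trace_Q_nonneg : 0 ≤ Q.trace.re := (Complex.nonneg_iff.1 hQ.trace_nonneg).1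
  have hl : (0 : ℝ) < 2 ^ (-l) := by positivity
  let W' := W + Fintype.card a • partialTrace Q
  have hW' : W'.PosSemidef :=
    hW.add (nsmul_nonneg (posSemidef_partialTrace hQ).nonneg _).posSemidef
  have hσW' : σ ≤ 1 ⊗ₖ W' := by
    rw [kronecker_add]
    exact h.trans (add_le_add hρW (le_one_kronecker_card_smul_partialTrace hQ))
  have logb_trace_W' : Real.logb 2 W'.trace.re ≤
      -l + Real.logb 2 (1 + Q.trace.re / ρ.trace.re * Fintype.card a ^ 2) :=
    calc
      Real.logb 2 W'.trace.re
        ≤ Real.logb 2 (2 ^ (-l) * (1 + Q.trace.re / ρ.trace.re * Fintype.card a ^ 2)) := by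
          refine Real.logb_le_logb_of_le one_lt_two
            (re_trace_pos_of_le_one_kronecker hσ_pos hσW') ?_
          simpa only [hW_trace, Complex.ofReal_re] using
            re_trace_add_card_smul_partialTrace_le hρ_pos trace_Q_nonneg hρW
      _ = -l + Real.logb 2 (1 + Q.trace.re / ρ.trace.re * Fintype.card a ^ 2) := by
          rw [Real.logb_mul hl.ne' (by positivity), Real.logb_rpow two_pos (by norm_num)]
  linarith [neg_logb_re_trace_le_Hmin hσ_pos hW' hσW']

theorem Hmin_sub_Hmin_le_of_traceNorm_le {ε : ℝ} (hρ : IsDensity ρ)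
    (hσ : IsDensity σ) (hdist : 1 / 2 * traceNorm (σ - ρ) ≤ ε) :
    Hmin ρ - Hmin σ ≤ Real.logb 2 (1 + ε * Fintype.card a ^ 2) := by
  have herm : (σ - ρ).IsHermitian := hσ.1.1.sub hρ.1.1
  have posPart_psd : ((σ - ρ)⁺).PosSemidef := (CFC.posPart_nonneg (σ - ρ)).posSemidef
  have trace_posPart_le : ((σ - ρ)⁺).trace.re ≤ ε := by
    simpa [re_trace_posPart herm, trace_sub, hρ.2, hσ.2] using hdist
  have trace_posPart_nonneg : 0 ≤ ((σ - ρ)⁺).trace.re :=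
    (Complex.nonneg_iff.1 posPart_psd.trace_nonneg).1
  have le_add_posPart : σ ≤ ρ + (σ - ρ)⁺ := sub_le_iff_le_add'.1 (CFC.le_posPart herm)
  calc
    Hmin ρ - Hmin σ
      ≤ Real.logb 2 (1 + ((σ - ρ)⁺).trace.re / ρ.trace.re * Fintype.card a ^ 2) :=
        Hmin_sub_Hmin_le_of_le_add hρ.1 (by simp [hρ.2]) (by simp [hσ.2]) posPart_psd
          le_add_posPart
    _ ≤ Real.logb 2 (1 + ε * Fintype.card a ^ 2) := by
        rw [hρ.2, Complex.one_re, div_one]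
        exact Real.logb_le_logb_of_le one_lt_two (by positivity) (by gcongr)

theorem Hmin_uniform_continuity_general {ε : ℝ} (hρ : IsDensity ρ)
    (hσ : IsDensity σ) (hdist : 1 / 2 * traceNorm (ρ - σ) ≤ ε) :
    |Hmin σ - Hmin ρ| ≤ Real.logb 2 (1 + ε * Fintype.card a ^ 2) :=
  abs_sub_le_iff.2 ⟨Hmin_sub_Hmin_le_of_traceNorm_le hσ hρ hdist,
    Hmin_sub_Hmin_le_of_traceNorm_le hρ hσ (traceNorm_sub_comm ρ σ ▸ hdist)⟩

end MinEntropy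

/-- Uniform continuity bound for the conditional min-entropy. -/
theorem Hmin_uniform_continuity {dA dB : ℕ} (ε : ℝ) (hε : ε ∈ Set.Icc (0:ℝ) 1)
    (ρ σ : Matrix (Fin dA × Fin dB) (Fin dA × Fin dB) ℂ)
    (hρ : IsDensity ρ) (hσ : IsDensity σ)
    (hdist : (1/2) * traceNorm (ρ - σ) ≤ ε) :
    |Hmin σ - Hmin ρ| ≤ Real.logb 2 (1 + ε * (dA : ℝ)^2) := by
  simpa only [Fintype.card_fin] using Hmin_uniform_continuity_general hρ hσ hdist
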